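/- Let Y be a real random variable distributed according to the Gaussian measure with mean μ ∈ ℝ and variance σ² where σ > 0, let a ∈ ℝ, and let ξ ≥ 0 be an exploration–exploitation parameter. Then E[max(Y − a − ξ, 0)] = (μ − a − ξ)·Φ(Z) + σ·φ(Z), where Z = (μ − a − ξ)/σ, φ is the standard normal probability density function and Φ the standard normal cumulative distribution function. (This is the closed form of the Expected Improvement acquisition function with exploration trade-off parameter ξ.) -/

import Mathlib

open MeasureTheory Set ProbabilityTheory

/-- The standard normal probability density function φ. -/
noncomputable def stdNormalPDF (z : ℝ) : ℝ :=
  (1 / Real.sqrt (2 * Real.pi)) * Real.exp (-z ^ 2 / 2)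

/-- The standard normal cumulative distribution function Φ. -/
noncomputable def stdNormalCDF (z : ℝ) : ℝ :=
  ∫ t in Iic z, stdNormalPDF t

/-!
Only the threshold `c = a + ξ` matters. On `[c, ∞)` split `y - c = (y - μ) + (μ - c)`. The first
summand integrates against `N(μ, v)` to `v` times the density at `c`, because `-v` times the density
is an antiderivative of `y - μ` times the density; the second contributes `μ - c` times the tail
probability. Standardization expresses the density and the tail through `φ` and `Φ`.
-/

open scoped NNReal

section GaussianReal

variable (μ c : ℝ) (v : ℝ≥0)

lemma hasDerivAt_gaussianPDFReal (x : ℝ) :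
    HasDerivAt (gaussianPDFReal μ v) (-((x - μ) / v * gaussianPDFReal μ v x)) x := by
  have hexponent : HasDerivAt (fun y ↦ -(y - μ) ^ 2 / (2 * v)) (-((x - μ) / v)) x :=
    ((((hasDerivAt_id x).sub_const μ).pow 2).fun_neg.div_const _).congr_deriv
      (by simp only [id]; field)
  exact (hexponent.exp.const_mul _).congr_deriv (by rw [gaussianPDFReal]; ring)

lemma integrable_sub_mean_gaussianReal : Integrable (fun y ↦ y - μ) (gaussianReal μ v) :=
  ((memLp_id_gaussianReal 1).integrable le_rfl).sub (integrable_const μ)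

lemma integrable_gaussianPDFReal_mul_sub_mean :
    Integrable fun y ↦ gaussianPDFReal μ v y * (y - μ) := by
  rcases eq_or_ne v 0 with rfl | hv
  · simp
  have hint := integrable_sub_mean_gaussianReal μ v
  rw [gaussianReal_of_var_ne_zero μ hv, integrable_withDensity_iff_integrable_smul'
    (measurable_gaussianPDF μ v) (ae_of_all _ fun _ ↦ gaussianPDF_lt_top)] at hint
  simpa only [toReal_gaussianPDF, smul_eq_mul] using hint

lemma integral_Ioi_gaussianPDFReal_mul_sub_mean :
    ∫ y in Ioi c, gaussianPDFReal μ v y * (y - μ) = v * gaussianPDFReal μ v c := by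
  rcases eq_or_ne v 0 with rfl | hv
  · simp
  have hderiv : ∀ y ∈ Ici c,
      HasDerivAt (fun y ↦ -(v * gaussianPDFReal μ v y)) (gaussianPDFReal μ v y * (y - μ)) y :=
    fun y _ ↦ ((hasDerivAt_gaussianPDFReal μ v y).const_mul (v : ℝ)).fun_neg.congr_deriv (by field)
  have hint := (integrable_gaussianPDFReal_mul_sub_mean μ v).integrableOn (s := Ioi c)
  have hlim := tendsto_zero_of_hasDerivAt_of_integrableOn_Ioi
    (fun y hy ↦ hderiv y (Ioi_subset_Ici_self hy)) hint
    ((integrable_gaussianPDFReal μ v).const_mul (v : ℝ)).neg.integrableOn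
  rw [integral_Ioi_of_hasDerivAt_of_tendsto' hderiv hint hlim, zero_sub, neg_neg]

lemma integral_Ici_sub_mean_gaussianReal :
    ∫ y in Ici c, (y - μ) ∂gaussianReal μ v = v * gaussianPDFReal μ v c := by
  rcases eq_or_ne v 0 with rfl | hv
  · by_cases h : μ ∈ Ici c <;> simp [gaussianReal_zero_var, setIntegral_dirac, h]
  rw [← integral_indicator measurableSet_Ici, integral_gaussianReal_eq_integral_smul hv]
  simp_rw [← indicator_smul_apply, smul_eq_mul]
  rw [integral_indicator measurableSet_Ici, integral_Ici_eq_integral_Ioi,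
    integral_Ioi_gaussianPDFReal_mul_sub_mean]

lemma integral_max_sub_zero (ν : Measure ℝ) :
    ∫ y, max (y - c) 0 ∂ν = ∫ y in Ici c, (y - c) ∂ν := by
  rw [← integral_indicator measurableSet_Ici]
  congr with y
  rcases le_or_gt c y with hy | hy
  · rw [indicator_of_mem (mem_Ici.2 hy), max_eq_left (sub_nonneg.2 hy)]
  · rw [indicator_of_notMem (notMem_Ici.2 hy), max_eq_right (sub_nonpos.2 hy.le)]

theorem integral_max_sub_zero_gaussianReal :
    ∫ y, max (y - c) 0 ∂gaussianReal μ v =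
      (μ - c) * (gaussianReal μ v).real (Ici c) + v * gaussianPDFReal μ v c := by
  calc ∫ y, max (y - c) 0 ∂gaussianReal μ v
    _ = ∫ y in Ici c, ((μ - c) + (y - μ)) ∂gaussianReal μ v := by
      simp_rw [integral_max_sub_zero, add_comm (μ - c), sub_add_sub_cancel]
    _ = (∫ _ in Ici c, (μ - c) ∂gaussianReal μ v) + ∫ y in Ici c, (y - μ) ∂gaussianReal μ v :=
      integral_add (integrable_const _) (integrable_sub_mean_gaussianReal μ v).integrableOn
    _ = (μ - c) * (gaussianReal μ v).real (Ici c) + v * gaussianPDFReal μ v c := by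
      rw [setIntegral_const, smul_eq_mul, mul_comm, integral_Ici_sub_mean_gaussianReal]

end GaussianReal

section Standardization

lemma stdNormalPDF_eq_gaussianPDFReal : stdNormalPDF = gaussianPDFReal 0 1 := by
  ext z
  simp [stdNormalPDF, gaussianPDFReal]

lemma stdNormalCDF_eq_measureReal_Iic (z : ℝ) :
    stdNormalCDF z = (gaussianReal 0 1).real (Iic z) := by
  rw [stdNormalCDF, stdNormalPDF_eq_gaussianPDFReal, measureReal_def,
    gaussianReal_apply_eq_integral 0 one_ne_zero,
    ENNReal.toReal_ofReal (integral_nonneg (gaussianPDFReal_nonneg 0 1))]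

lemma gaussianReal_eq_map_const_sub_mul (μ σ : ℝ) :
    gaussianReal μ (.mk (σ ^ 2) (sq_nonneg σ)) = (gaussianReal 0 1).map fun x ↦ μ - σ * x := by
  have hcomp := Measure.map_map (μ := gaussianReal 0 1) (f := fun x ↦ σ * x) (g := fun x ↦ μ - x)
    (by fun_prop) (by fun_prop)
  rw [gaussianReal_map_const_mul, gaussianReal_map_const_sub, mul_zero, sub_zero, mul_one] at hcomp
  exact hcomp

lemma gaussianReal_real_Ici (μ c : ℝ) {σ : ℝ} (hσ : 0 < σ) :
    (gaussianReal μ (.mk (σ ^ 2) (sq_nonneg σ))).real (Ici c) = stdNormalCDF ((μ - c) / σ) := by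
  have hpreimage : (fun x ↦ μ - σ * x) ⁻¹' Ici c = Iic ((μ - c) / σ) := by
    ext x
    rw [mem_preimage, mem_Ici, mem_Iic, le_sub_comm, le_div_iff₀' hσ]
  rw [gaussianReal_eq_map_const_sub_mul, map_measureReal_apply (by fun_prop) measurableSet_Ici,
    hpreimage, stdNormalCDF_eq_measureReal_Iic]

lemma gaussianPDFReal_eq_stdNormalPDF_div (μ c : ℝ) {σ : ℝ} (hσ : 0 < σ) :
    gaussianPDFReal μ (.mk (σ ^ 2) (sq_nonneg σ)) c = stdNormalPDF ((μ - c) / σ) / σ := by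
  have hsqrt : √(2 * Real.pi * σ ^ 2) = √(2 * Real.pi) * σ := by
    rw [Real.sqrt_mul (by positivity), Real.sqrt_sq hσ.le]
  have hexponent : -(c - μ) ^ 2 / (2 * σ ^ 2) = -((μ - c) / σ) ^ 2 / 2 := by field
  rw [gaussianPDFReal, NNReal.coe_mk, hsqrt, hexponent, stdNormalPDF]
  field

end Standardization

/-- If `Y ~ N(μ, σ²)` with `σ > 0` and `ξ ≥ 0`, then
`E[max(Y − a − ξ, 0)] = (μ − a − ξ)·Φ(Z) + σ·φ(Z)` with `Z = (μ − a − ξ)/σ`.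
This is the closed form of the Expected Improvement acquisition function with
exploration–exploitation trade-off parameter `ξ`. -/
theorem expectedImprovement_gaussian_tradeoff (μ a σ ξ : ℝ) (hσ : 0 < σ) (hξ : 0 ≤ ξ) :
    ∫ y, max (y - a - ξ) 0 ∂(gaussianReal μ ⟨σ ^ 2, sq_nonneg σ⟩) =
      (μ - a - ξ) * stdNormalCDF ((μ - a - ξ) / σ) +
        σ * stdNormalPDF ((μ - a - ξ) / σ) := by
  simp only [sub_sub]
  calc ∫ y, max (y - (a + ξ)) 0 ∂gaussianReal μ (.mk (σ ^ 2) (sq_nonneg σ))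
    _ = (μ - (a + ξ)) * stdNormalCDF ((μ - (a + ξ)) / σ) +
          σ ^ 2 * (stdNormalPDF ((μ - (a + ξ)) / σ) / σ) := by
      rw [integral_max_sub_zero_gaussianReal, gaussianReal_real_Ici μ _ hσ,
        gaussianPDFReal_eq_stdNormalPDF_div μ _ hσ, NNReal.coe_mk]
    _ = (μ - (a + ξ)) * stdNormalCDF ((μ - (a + ξ)) / σ) +
          σ * stdNormalPDF ((μ - (a + ξ)) / σ) := by
      field
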